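/- Let ∑_{i=1}^k αᵢ sᵢ ≥ 1 with α ∈ ℝ^k, α ≥ 0, be a valid inequality for conv(P(R,f)) whose induced lattice-free set L_α is a quadrilateral of type Q¹ with f in the interior of L_α. Then the split rank of ∑_{i=1}^k αᵢ sᵢ ≥ 1 with respect to P(R,f)⁰ is finite (in particular, this holds even when L_α is a proper subset of a triangle of type T¹). -/

import Mathlib

open Set Pointwise

abbrev Pt : Type := Fin 2 → ℝ

def IsIntPt (x : Pt) : Prop := ∀ j, ∃ z : ℤ, x j = (z : ℝ)

def IsRatPt (x : Pt) : Prop := ∀ j, ∃ q : ℚ, x j = (q : ℝ)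

/-- The mixed-integer set `P(R,f)`. -/
def mixedP (k : ℕ) (r : Fin k → Pt) (f : Pt) : Set (Pt × (Fin k → ℝ)) :=
  {p | IsIntPt p.1 ∧ (∀ i, 0 ≤ p.2 i) ∧ p.1 = f + ∑ i, p.2 i • r i}

/-- The linear relaxation `P(R,f)⁰`. -/
def relaxP (k : ℕ) (r : Fin k → Pt) (f : Pt) : Set (Pt × (Fin k → ℝ)) :=
  {p | (∀ i, 0 ≤ p.2 i) ∧ p.1 = f + ∑ i, p.2 i • r i}

/-- The convex cone generated by a set (all nonnegative combinations). -/
def coneGen (S : Set Pt) : Set Pt :=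
  {x | ∃ (n : ℕ) (c : Fin n → ℝ) (v : Fin n → Pt),
    (∀ j, 0 ≤ c j) ∧ (∀ j, v j ∈ S) ∧ x = ∑ j, c j • v j}

/-- The induced lattice-free set `L_α`. -/
def inducedSet (k : ℕ) (r : Fin k → Pt) (f : Pt) (α : Fin k → ℝ) : Set Pt :=
  convexHull ℝ ({f} ∪ {x | ∃ i, 0 < α i ∧ x = f + (α i)⁻¹ • r i}) +
    coneGen {x | ∃ i, α i = 0 ∧ x = r i}

def LatticeFree (S : Set Pt) : Prop := ∀ x ∈ interior S, ¬ IsIntPt x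

/-- Validity of `∑ αᵢ sᵢ ≥ γ` for `conv(P(R,f))`. -/
def ValidIneq (k : ℕ) (r : Fin k → Pt) (f : Pt) (α : Fin k → ℝ) (γ : ℝ) : Prop :=
  ∀ p ∈ mixedP k r f, γ ≤ ∑ i, α i * p.2 i

noncomputable def affDim {V : Type*} [AddCommGroup V] [Module ℝ V] (S : Set V) : ℕ :=
  Module.finrank ℝ (affineSpan ℝ S).direction

/-- Facet-defining inequality: valid and its face of the closed convex hull has
affine dimension exactly one less. -/
def IsFacet (k : ℕ) (r : Fin k → Pt) (f : Pt) (α : Fin k → ℝ) (γ : ℝ) : Prop :=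
  ValidIneq k r f α γ ∧
  affDim {p ∈ closure (convexHull ℝ (mixedP k r f)) | ∑ i, α i * p.2 i = γ} + 1 =
    affDim (convexHull ℝ (mixedP k r f))

def splitClosure (k : ℕ) (C : Set (Pt × (Fin k → ℝ))) : Set (Pt × (Fin k → ℝ)) :=
  ⋂ (π : Fin 2 → ℤ) (π₀ : ℤ),
    convexHull ℝ ((C ∩ {p | ∑ j, (π j : ℝ) * p.1 j ≤ (π₀ : ℝ)}) ∪
      (C ∩ {p | (π₀ : ℝ) + 1 ≤ ∑ j, (π j : ℝ) * p.1 j}))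

def closures (k : ℕ) (r : Fin k → Pt) (f : Pt) : ℕ → Set (Pt × (Fin k → ℝ))
  | 0 => relaxP k r f
  | n + 1 => splitClosure k (closures k r f n)

/-- The split rank of `∑ αᵢ sᵢ ≥ γ` w.r.t. `P(R,f)⁰`: least `j` such that the
inequality is valid on the `j`-th split closure, `⊤` if none exists. -/
noncomputable def splitRank (k : ℕ) (r : Fin k → Pt) (f : Pt) (α : Fin k → ℝ) (γ : ℝ) : ℕ∞ :=
  sInf {j : ℕ∞ | ∃ n : ℕ, j = (n : ℕ∞) ∧ ∀ p ∈ closures k r f n, γ ≤ ∑ i, α i * p.2 i}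

def IsSplitSet (S : Set Pt) : Prop :=
  ∃ (π : Fin 2 → ℤ) (π₀ : ℤ), π ≠ 0 ∧
    S = {x : Pt | (π₀ : ℝ) ≤ ∑ j, (π j : ℝ) * x j ∧ ∑ j, (π j : ℝ) * x j ≤ (π₀ : ℝ) + 1}

/-- Triangle of type `T¹`. -/
def IsT1 (S : Set Pt) : Prop :=
  ∃ v : Fin 3 → Pt, AffineIndependent ℝ v ∧ (∀ i, IsIntPt (v i)) ∧
    S = convexHull ℝ (Set.range v) ∧
    ∀ i j, i ≠ j → ∃! z, z ∈ openSegment ℝ (v i) (v j) ∧ IsIntPt z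

/-- Triangle of type `T^{2A}`. -/
def IsT2A (S : Set Pt) : Prop :=
  ∃ v0 v1 v2 : Pt, AffineIndependent ℝ ![v0, v1, v2] ∧ ¬ IsIntPt v0 ∧
    S = convexHull ℝ {v0, v1, v2} ∧
    (∃ z1 z2 : Pt, z1 ≠ z2 ∧ IsIntPt z1 ∧ IsIntPt z2 ∧
      z1 ∈ segment ℝ v1 v2 ∧ z2 ∈ segment ℝ v1 v2) ∧
    (∃! z, z ∈ openSegment ℝ v0 v1 ∧ IsIntPt z) ∧
    (∃! z, z ∈ openSegment ℝ v0 v2 ∧ IsIntPt z)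

/-- Triangle of type `T^{2B}`. -/
def IsT2B (S : Set Pt) : Prop :=
  ∃ v0 v1 v2 : Pt, AffineIndependent ℝ ![v0, v1, v2] ∧ ¬ IsIntPt v0 ∧
    S = convexHull ℝ {v0, v1, v2} ∧
    (∃ z1 z2 : Pt, z1 ≠ z2 ∧ IsIntPt z1 ∧ IsIntPt z2 ∧
      z1 ∈ segment ℝ v1 v2 ∧ z2 ∈ segment ℝ v1 v2) ∧
    (∃! z, z ∈ openSegment ℝ v0 v1 ∧ IsIntPt z) ∧
    (∀ z ∈ openSegment ℝ v0 v2, ¬ IsIntPt z)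

/-- Triangle of type `T³`. -/
def IsT3 (S : Set Pt) : Prop :=
  ∃ v0 v1 v2 : Pt, AffineIndependent ℝ ![v0, v1, v2] ∧
    ¬ IsIntPt v0 ∧ ¬ IsIntPt v1 ∧ ¬ IsIntPt v2 ∧
    S = convexHull ℝ {v0, v1, v2} ∧
    (∃! z, z ∈ openSegment ℝ v0 v1 ∧ IsIntPt z) ∧
    (∃! z, z ∈ openSegment ℝ v1 v2 ∧ IsIntPt z) ∧
    (∃! z, z ∈ openSegment ℝ v0 v2 ∧ IsIntPt z) ∧
    (∀ z, IsIntPt z → z ∈ frontier S →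
      z ∈ openSegment ℝ v0 v1 ∨ z ∈ openSegment ℝ v1 v2 ∨ z ∈ openSegment ℝ v0 v2)

/-- A quadrilateral with vertices `v 0, v 1, v 2, v 3` in cyclic order; each `vᵢ`
is an extreme point of the hull and each side lies on the boundary. -/
def IsQuadWith (S : Set Pt) (v : Fin 4 → Pt) : Prop :=
  S = convexHull ℝ (Set.range v) ∧
  (∀ i, v i ∈ Set.extremePoints ℝ S) ∧
  (∀ i : Fin 4, segment ℝ (v i) (v (i + 1)) ⊆ frontier S)

/-- Quadrilateral of type `Q¹`. -/
def IsQ1 (S : Set Pt) : Prop :=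
  ∃ v : Fin 4 → Pt, IsQuadWith S v ∧
    (∃ z1 z2 : Pt, z1 ≠ z2 ∧ IsIntPt z1 ∧ IsIntPt z2 ∧
      z1 ∈ segment ℝ (v 0) (v 1) ∧ z2 ∈ segment ℝ (v 0) (v 1)) ∧
    (∃ j : Fin 4, j ≠ 0 ∧
      (∀ i : Fin 4, i ≠ 0 → i ≠ j → ∃ z, IsIntPt z ∧ z ∈ segment ℝ (v i) (v (i + 1))) ∧
      (∀ z ∈ openSegment ℝ (v j) (v (j + 1)), ¬ IsIntPt z)) ∧
    (∃ T : Set Pt, (IsT1 T ∨ IsT2A T) ∧ S ⊆ T)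

/-- Quadrilateral of type `Q²`. -/
def IsQ2 (S : Set Pt) : Prop :=
  ∃ v : Fin 4 → Pt, IsQuadWith S v ∧ (∀ i, ¬ IsIntPt (v i)) ∧
    ∀ i : Fin 4, ∃! z, z ∈ openSegment ℝ (v i) (v (i + 1)) ∧ IsIntPt z

/-!
All estimates concern the pairs `(x, z)` with `z = ∑ αᵢ sᵢ`. Every supporting half-plane
`0 ≤ a + b x₀ + c x₁` of `L_α` gives a cut `1 - e (a + b x₀ + c x₁) ≤ z` of the relaxation, of some
slope `e`, and a split may be used to prove any affine lower bound on `z`. A lattice equivalence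
moves the integral base to the `x₀`-axis so that `L_α` lies in `0 ≤ x₁`, has `(0, 0)` and `(1, 0)`
on its boundary and, unless it lies in the strip `0 ≤ x₁ ≤ 1`, contains an interior point between
`(0, 1)` and `(1, 1)`. Lines supporting `L_α` at these two lattice points then bound it by
`x₀ ≤ 1 + β (1 - x₁)` and `-x₀ ≤ β' (1 - x₁)` with `0 ≤ β, β'`.

Suppose that `1 - D ≤ z` is known. If `p β - q ≥ 0` is small, which Dirichlet's theorem provides,
then the split along `p (1 - x₀) + q (1 - x₁)` followed by the horizontal one shrinks the slope of
the right cut by the factor `3 / 4`, until it is at most `4 p D`; similarly on the left. Outside of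
the strip `0 < x₀ < 1` these cuts, together with that of the base, improve `D` by a constant factor.
Alternating, finitely many splits make the slopes of both cuts arbitrarily small.

If `β, β' > 0`, the original cuts and those of small slope give a common bound
`1 - κ (1 - x₁) ≤ z` outside of `0 < x₀ < 1`, and the horizontal split finishes. If, say, `β' = 0`,
then `L_α` lies in the quadrant at its lattice point `(0, 0)`, and a cut of small slope can be
carried around the corner as soon as `x₀ < 2` or `x₁ < 2` on `L_α`. Otherwise `L_α` is the triangle
with vertices `(0, 0)`, `(2, 0)`, `(0, 2)`, all of whose sides have integral midpoints, whereas a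
quadrilateral of type `Q¹` has a side without interior lattice point.
-/

lemma exists_pos_add_smul_mem {E : Type*} [AddCommGroup E] [Module ℝ E] [TopologicalSpace E]
    [ContinuousAdd E] [ContinuousSMul ℝ E] {s : Set E} {x : E} (hx : x ∈ interior s) (v : E) :
    ∃ δ : ℝ, 0 < δ ∧ x + δ • v ∈ s := by
  have hcont : Continuous fun δ : ℝ => x + δ • v := by fun_prop
  have hnear : ∀ᶠ δ : ℝ in nhds 0, x + δ • v ∈ s :=
    hcont.continuousAt.eventually_mem (by simpa using mem_interior_iff_mem_nhds.1 hx)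
  obtain ⟨δ, hmem, hδ⟩ := ((hnear.filter_mono nhdsWithin_le_nhds).and
    (self_mem_nhdsWithin : Ioi (0 : ℝ) ∈ nhdsWithin 0 (Ioi 0))).exists
  exact ⟨δ, hδ, hmem⟩

lemma exists_le_of_contracting {P : ℝ → Prop} {θ B e₀ : ℝ} (hθ0 : 0 < θ) (hθ1 : θ < 1)
    (hB : 0 < B) (he₀ : 0 < e₀) (h₀ : P e₀) (hstep : ∀ e, B ≤ e → e ≤ e₀ → P e → P (θ * e)) :
    ∃ e, 0 < e ∧ e ≤ B ∧ P e := by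
  by_contra! hcon
  have hpow : ∀ n : ℕ, P (θ ^ n * e₀) := by
    intro n
    induction n with
    | zero => simpa using h₀
    | succ n ih =>
      have hpos : 0 < θ ^ n * e₀ := by positivity
      have hle : θ ^ n * e₀ ≤ e₀ := mul_le_of_le_one_left he₀.le (pow_le_one₀ hθ0.le hθ1.le)
      rw [pow_succ', mul_assoc]
      exact hstep _ (not_lt.1 fun h => hcon _ hpos h.le ih) hle ih
  obtain ⟨n, hn⟩ := exists_pow_lt_of_lt_one (div_pos hB he₀) hθ1
  exact hcon _ (by positivity) ((lt_div_iff₀ he₀).1 hn).le (hpow n)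

lemma exists_int_abs_mul_sub_le (β : ℝ) {δ : ℝ} (hδ : 0 < δ) :
    ∃ p q : ℤ, 0 < p ∧ |p * β - q| ≤ δ := by
  obtain ⟨n, hn⟩ := exists_nat_gt (1 / δ)
  have hn0 : 0 < n := Nat.cast_pos.1 ((one_div_pos.2 hδ).trans hn)
  obtain ⟨q, p, hp, -, hpq⟩ := Real.exists_int_int_abs_mul_sub_le β hn0
  refine ⟨p, q, hp, hpq.trans ?_⟩
  rw [div_lt_iff₀ hδ] at hn
  rw [div_le_iff₀ (by positivity)]
  linarith

/-- If `0 < q - p * β` is too small, the largest multiple of it not exceeding `1` falls short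
of `1` by less than that amount. -/
lemma exists_int_mul_sub_mem_Icc (β : ℝ) {δ : ℝ} (hδ : 0 < δ) :
    ∃ p q : ℤ, 0 < p ∧ p * β - q ∈ Icc 0 δ := by
  obtain ⟨p, q, hp, hpq⟩ := exists_int_abs_mul_sub_le β (lt_min hδ one_pos)
  obtain ⟨hδ', h1⟩ := le_min_iff.1 hpq
  rcases le_or_gt 0 ((p : ℝ) * β - q) with h | h
  · exact ⟨p, q, hp, h, (le_abs_self _).trans hδ'⟩
  rw [abs_of_neg h] at hδ' h1
  set d : ℝ := -(p * β - q) with hd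
  have hd0 : 0 < d := neg_pos.2 h
  have hfloor : (⌊1 / d⌋ : ℝ) * d ≤ 1 := (le_div_iff₀ hd0).1 (Int.floor_le _)
  have hfloor' : 1 < (⌊1 / d⌋ + 1 : ℝ) * d := (div_lt_iff₀ hd0).1 (Int.lt_floor_add_one _)
  have hpos : 0 < ⌊1 / d⌋ := Int.floor_pos.2 ((one_le_div hd0).2 h1)
  have hrem : (⌊1 / d⌋ * p : ℤ) * β - (⌊1 / d⌋ * q - 1 : ℤ) = 1 - ⌊1 / d⌋ * d := by
    push_cast
    rw [hd]
    ring
  refine ⟨⌊1 / d⌋ * p, ⌊1 / d⌋ * q - 1, mul_pos hpos hp, ?_⟩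
  rw [hrem]
  constructor <;> linarith

/-- The affine form `x ↦ a + b x₀ + c x₁` on the plane. -/
noncomputable def affForm (a b c : ℝ) : Pt →ᵃ[ℝ] ℝ :=
  AffineMap.const ℝ Pt a +
    (b • LinearMap.proj (R := ℝ) (φ := fun _ : Fin 2 => ℝ) 0 + c • LinearMap.proj 1).toAffineMap

@[simp]
lemma affForm_apply (a b c : ℝ) (x : Pt) : affForm a b c x = a + b * x 0 + c * x 1 := by
  simp [affForm, add_assoc]

lemma affForm_pos_of_mem_interior {L : Set Pt} {f : Pt} (hf : f ∈ interior L) {a b c : ℝ}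
    (hbc : b ≠ 0 ∨ c ≠ 0) (hL : ∀ x ∈ L, 0 ≤ a + b * x 0 + c * x 1) : 0 < affForm a b c f := by
  obtain ⟨δ, hδ, hmem⟩ := exists_pos_add_smul_mem hf (-![b, c])
  have h := hL _ hmem
  have hsq : 0 < b * b + c * c := by
    rcases hbc with hb | hc
    · exact add_pos_of_pos_of_nonneg (mul_self_pos.2 hb) (mul_self_nonneg c)
    · exact add_pos_of_nonneg_of_pos (mul_self_nonneg b) (mul_self_pos.2 hc)
  simp only [Matrix.neg_cons, Matrix.neg_empty, Matrix.smul_cons, Matrix.smul_empty, smul_eq_mul,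
    Pi.add_apply, Matrix.cons_val_zero, Matrix.cons_val_one, Matrix.cons_val_fin_one] at h
  rw [affForm_apply]
  nlinarith

/-- An affine form taking integral values at the lattice points; the strips `0 ≤ h ≤ 1` are the
splits. -/
def IsIntegralForm (h : Pt →ᵃ[ℝ] ℝ) : Prop :=
  ∀ x, IsIntPt x → ∃ n : ℤ, h x = n

/-- A filter on pairs `(x, z)` is split closed if every affine lower bound on `z` that holds
eventually outside of a split holds eventually. The example of interest is the filter of the split
closures, with `z = ∑ αᵢ sᵢ`. -/
def SplitClosed (F : Filter (Pt × ℝ)) : Prop :=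
  ∀ h, IsIntegralForm h → ∀ ℓ : Pt →ᵃ[ℝ] ℝ,
    (∀ᶠ t in F, (h t.1 ≤ 0 ∨ 1 ≤ h t.1) → ℓ t.1 ≤ t.2) → ∀ᶠ t in F, ℓ t.1 ≤ t.2

lemma isIntegralForm_affForm (a b c : ℤ) : IsIntegralForm (affForm a b c) := by
  intro x hx
  obtain ⟨m, hm⟩ := hx 0
  obtain ⟨n, hn⟩ := hx 1
  exact ⟨a + b * m + c * n, by simp [hm, hn]⟩

namespace SplitClosed

variable {F : Filter (Pt × ℝ)}

lemma of_split (hF : SplitClosed F) (a b m : ℤ) (A B C : ℝ)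
    (h : ∀ᶠ t in F, ((a : ℝ) * t.1 0 + b * t.1 1 ≤ m ∨ (m : ℝ) + 1 ≤ a * t.1 0 + b * t.1 1) →
      A + B * t.1 0 + C * t.1 1 ≤ t.2) :
    ∀ᶠ t in F, A + B * t.1 0 + C * t.1 1 ≤ t.2 := by
  have key := hF _ (isIntegralForm_affForm (-m) a b) (affForm A B C) ?_
  · simpa only [affForm_apply] using key
  · filter_upwards [h] with t ht hsplit
    simp only [affForm_apply, Int.cast_neg] at hsplit ⊢
    exact ht (hsplit.imp (fun _ => by linarith) fun _ => by linarith)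

lemma of_horizontal_split (hF : SplitClosed F) (A B C : ℝ)
    (h : ∀ᶠ t in F, (t.1 1 ≤ 0 ∨ 1 ≤ t.1 1) → A + B * t.1 0 + C * t.1 1 ≤ t.2) :
    ∀ᶠ t in F, A + B * t.1 0 + C * t.1 1 ≤ t.2 :=
  hF.of_split 0 1 0 A B C (by simpa using h)

lemma of_vertical_split (hF : SplitClosed F) (m : ℤ) (A B C : ℝ)
    (h : ∀ᶠ t in F, (t.1 0 ≤ (m : ℝ) ∨ (m : ℝ) + 1 ≤ t.1 0) → A + B * t.1 0 + C * t.1 1 ≤ t.2) :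
    ∀ᶠ t in F, A + B * t.1 0 + C * t.1 1 ≤ t.2 :=
  hF.of_split 1 0 m A B C (by simpa using h)

/-- On the part `s ≥ 1` of the split, where `s = p (1 - x₀) + q (1 - x₁)`, either the constant
bound or, if `(p β - q) (x₁ - 1) > 1 / 2`, the bound growing with the height applies. -/
lemma tilted_cut (hF : SplitClosed F) (p q : ℤ) {β η : ℝ} (hη : 0 ≤ η)
    (hheight : ∀ᶠ t in F, 1 / 2 < (p * β - q) * (t.1 1 - 1) →
      1 + 4 * η * ((p * β - q) * (t.1 1 - 1)) ≤ t.2)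
    (hdeficit : ∀ᶠ t in F, 1 - η ≤ t.2)
    (hslope : ∀ᶠ t in F, 1 - 4 * p * η * (1 - t.1 0 + β * (1 - t.1 1)) ≤ t.2) :
    ∀ᶠ t in F, 1 - 3 * p * η * (1 - t.1 0 + β * (1 - t.1 1))
      + η * ((p * β - q) * (t.1 1 - 1)) ≤ t.2 := by
  have key := hF.of_split p q (p + q - 1)
    (1 - 3 * p * η * (1 + β) - η * (p * β - q)) (3 * p * η) (3 * p * η * β + η * (p * β - q)) ?_
  · filter_upwards [key] with t ht
    linarith
  filter_upwards [hheight, hdeficit, hslope] with ⟨x, z⟩ hheight hdeficit hslope hsplit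
  push_cast at hsplit
  set u : ℝ := (p * β - q) * (x 1 - 1) with hu
  set s : ℝ := p * (1 - x 0) + q * (1 - x 1) with hs
  rw [show 4 * p * η * (1 - x 0 + β * (1 - x 1)) = 4 * (η * s) - 4 * (η * u) by rw [hu, hs]; ring]
    at hslope
  suffices h : 1 - 3 * (η * s) + 4 * (η * u) ≤ z by
    refine le_of_eq_of_le ?_ h
    rw [hu, hs]
    ring
  rcases hsplit with hsplit | hsplit
  · have hs1 : η ≤ η * s := le_mul_of_one_le_right hη (by linarith)
    rcases le_or_gt u (1 / 2) with hu2 | hu2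
    · have := mul_le_mul_of_nonneg_left hu2 hη
      linarith
    · linarith [hheight hu2]
  · have : η * s ≤ 0 := mul_nonpos_of_nonneg_of_nonpos hη (by linarith)
    linarith

lemma slope_step (hF : SplitClosed F) {p q : ℤ} (hp : 0 ≤ p) {β η M : ℝ} (hη : 0 ≤ η)
    (hM : 0 ≤ M) (hpq : 0 ≤ p * β - q)
    (hbase : ∀ᶠ t in F, 1 - M * t.1 1 ≤ t.2)
    (hheight : ∀ᶠ t in F, 1 / 2 < (p * β - q) * (t.1 1 - 1) →
      1 + 4 * η * ((p * β - q) * (t.1 1 - 1)) ≤ t.2)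
    (hdeficit : ∀ᶠ t in F, 1 - η ≤ t.2)
    (hslope : ∀ᶠ t in F, 1 - 4 * p * η * (1 - t.1 0 + β * (1 - t.1 1)) ≤ t.2) :
    ∀ᶠ t in F, 1 - 3 * p * η * (1 - t.1 0 + β * (1 - t.1 1)) ≤ t.2 := by
  have key := hF.of_horizontal_split (1 - 3 * p * η * (1 + β)) (3 * p * η) (3 * p * η * β) ?_
  · filter_upwards [key] with t ht
    linarith
  filter_upwards [hbase, hF.tilted_cut p q hη hheight hdeficit hslope, hslope]
    with t hbase htilted hslope hsplit
  have hp' : (0 : ℝ) ≤ p * η := mul_nonneg (Int.cast_nonneg hp) hη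
  rcases hsplit with hy | hy
  · rcases le_total 0 (1 - t.1 0 + β * (1 - t.1 1)) with hw | hw
    · nlinarith [mul_nonneg hp' hw, mul_nonneg hM (neg_nonneg.2 hy)]
    · nlinarith [mul_nonneg hp' (neg_nonneg.2 hw)]
  · have := mul_nonneg hη (mul_nonneg hpq (sub_nonneg.2 hy))
    linarith

lemma exists_slope_le (hF : SplitClosed F) {p q : ℤ} (hp : 0 < p) {β e₀ M c D : ℝ}
    (he₀ : 0 < e₀) (hM : 0 ≤ M) (hD : 0 < D) (hpq : 0 ≤ p * β - q)
    (hc : e₀ * (p * β - q) ≤ c * p)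
    (hbase : ∀ᶠ t in F, 1 - M * t.1 1 ≤ t.2)
    (hheight : ∀ᶠ t in F, 1 / 2 < (p * β - q) * (t.1 1 - 1) → 1 + c * (t.1 1 - 1) ≤ t.2)
    (hdeficit : ∀ᶠ t in F, 1 - D ≤ t.2)
    (hslope : ∀ᶠ t in F, 1 - e₀ * (1 - t.1 0 + β * (1 - t.1 1)) ≤ t.2) :
    ∃ e, 0 < e ∧ e ≤ 4 * p * D ∧ ∀ᶠ t in F, 1 - e * (1 - t.1 0 + β * (1 - t.1 1)) ≤ t.2 := by
  have hp' : (0 : ℝ) < p := Int.cast_pos.2 hp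
  refine exists_le_of_contracting (θ := 3 / 4) (by norm_num) (by norm_num) (by positivity) he₀
    hslope fun e hDe hee hslope => ?_
  set η := e / (4 * p) with hη
  have he : e = 4 * p * η := by rw [hη]; field_simp
  have hDη : D ≤ η := (le_div_iff₀ (by positivity)).2 (by linarith)
  have hηc : 4 * η * (p * β - q) ≤ c := by
    refine le_of_mul_le_mul_right ?_ hp'
    calc 4 * η * (p * β - q) * p = e * (p * β - q) := by rw [he]; ring
      _ ≤ e₀ * (p * β - q) := by gcongr
      _ ≤ c * p := hc
  have key := hF.slope_step hp.le (hD.le.trans hDη) hM hpq hbase ?_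
    (hdeficit.mono fun t ht => by linarith) (by rwa [← he])
  · filter_upwards [key] with t ht
    rw [he]
    linarith
  · filter_upwards [hheight] with t ht hu
    have hy : 0 ≤ t.1 1 - 1 := (pos_of_mul_pos_right (one_half_pos.trans hu) hpq).le
    linarith [ht hu, mul_le_mul_of_nonneg_right hηc hy]

lemma base_slope_min_deficit (hF : SplitClosed F) {M D : ℝ} (hD : 0 ≤ D)
    (hbase : ∀ᶠ t in F, 1 - M * t.1 1 ≤ t.2) (hdeficit : ∀ᶠ t in F, 1 - D ≤ t.2) :
    ∀ᶠ t in F, 1 - min M D * t.1 1 ≤ t.2 := by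
  rcases le_total M D with hMD | hDM
  · rwa [min_eq_left hMD]
  rw [min_eq_right hDM]
  have key := hF.of_horizontal_split 1 0 (-D) ?_
  · filter_upwards [key] with t ht
    linarith
  filter_upwards [hbase, hdeficit] with t hbase hdeficit hsplit
  rcases hsplit with hy | hy
  · linarith [mul_le_mul_of_nonpos_right hDM hy]
  · linarith [mul_le_mul_of_nonneg_left hy hD]

/-- The lines `1 - D y` and `1 - K D (1 - y)` cross at height `1 - K / (1 + K) D`. -/
lemma one_sub_le_of_crossing {m s K D y z : ℝ} (hm : 0 ≤ m) (hmD : m ≤ D) (hK : 0 ≤ K)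
    (hs : 0 ≤ s) (hsK : s ≤ K * D) (hz : 1 - m * y ≤ z) (hz' : 1 - s * (1 - y) ≤ z) :
    1 - K / (1 + K) * D ≤ z := by
  set θ : ℝ := K / (1 + K) with hθ
  have hθ0 : 0 ≤ θ := by positivity
  have hθ1 : θ ≤ 1 := (div_le_one (by positivity)).2 (by linarith)
  have hθK : (1 - θ) * K = θ := by rw [hθ]; field_simp; ring
  have hθD : 0 ≤ θ * D := mul_nonneg hθ0 (hm.trans hmD)
  rcases le_total y 0 with hy0 | hy0
  · linarith [mul_nonpos_of_nonneg_of_nonpos hm hy0]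
  rcases le_total 1 y with hy1 | hy1
  · linarith [mul_nonpos_of_nonneg_of_nonpos hs (sub_nonpos.2 hy1)]
  calc 1 - θ * D = θ * (1 - D * y) + (1 - θ) * (1 - K * D * (1 - y)) := by
        linear_combination D * (1 - y) * hθK
    _ ≤ θ * z + (1 - θ) * z := by
        have hDy := mul_le_mul_of_nonneg_right hmD hy0
        have hKDy := mul_le_mul_of_nonneg_right hsK (sub_nonneg.2 hy1)
        gcongr <;> linarith
    _ = z := by ring

lemma deficit_step (hF : SplitClosed F) {β β' e e' M K D : ℝ} (hM : 0 ≤ M) (hK : 0 ≤ K)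
    (hD : 0 ≤ D) (he : 0 ≤ e) (he' : 0 ≤ e') (hβ : 0 ≤ β) (hβ' : 0 ≤ β')
    (heK : e * β ≤ K * D) (heK' : e' * β' ≤ K * D)
    (hbase : ∀ᶠ t in F, 1 - M * t.1 1 ≤ t.2) (hdeficit : ∀ᶠ t in F, 1 - D ≤ t.2)
    (hright : ∀ᶠ t in F, 1 - e * (1 - t.1 0 + β * (1 - t.1 1)) ≤ t.2)
    (hleft : ∀ᶠ t in F, 1 - e' * (t.1 0 + β' * (1 - t.1 1)) ≤ t.2) :
    ∀ᶠ t in F, 1 - K / (1 + K) * D ≤ t.2 := by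
  have key := hF.of_vertical_split 0 (1 - K / (1 + K) * D) 0 0 ?_
  · simpa using key
  filter_upwards [hF.base_slope_min_deficit hD hbase hdeficit, hright, hleft]
    with t hbase hright hleft hsplit
  simp only [Int.cast_zero, zero_add, zero_mul, add_zero] at hsplit ⊢
  have hm : 0 ≤ min M D := le_min hM hD
  rcases hsplit with hx | hx
  · refine one_sub_le_of_crossing hm (min_le_right _ _) hK (mul_nonneg he' hβ') heK' hbase ?_
    linarith [mul_nonpos_of_nonneg_of_nonpos he' hx]
  · refine one_sub_le_of_crossing hm (min_le_right _ _) hK (mul_nonneg he hβ) heK hbase ?_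
    linarith [mul_nonneg he (sub_nonneg.2 hx)]

lemma one_sub_mul_one_sub_le {a b κ y z : ℝ} (ha : a ≤ κ) (hb : κ ≤ b)
    (hz : 1 - a * (1 - y) ≤ z) (hz' : 1 - b * (1 - y) ≤ z) : 1 - κ * (1 - y) ≤ z := by
  rcases le_total y 1 with hy | hy
  · linarith [mul_le_mul_of_nonneg_right ha (sub_nonneg.2 hy)]
  · linarith [mul_le_mul_of_nonpos_right hb (sub_nonpos.2 hy)]

lemma one_le_of_small_slopes (hF : SplitClosed F) {β β' e e' s s' M κ : ℝ} (hM : 0 ≤ M)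
    (he : 0 ≤ e) (he' : 0 ≤ e') (hs : 0 ≤ s) (hs' : 0 ≤ s') (hκ : 0 ≤ κ)
    (hκe : κ ≤ e * β) (hκe' : κ ≤ e' * β') (hsκ : s * β ≤ κ) (hsκ' : s' * β' ≤ κ)
    (hbase : ∀ᶠ t in F, 1 - M * t.1 1 ≤ t.2)
    (hright : ∀ᶠ t in F, 1 - e * (1 - t.1 0 + β * (1 - t.1 1)) ≤ t.2)
    (hleft : ∀ᶠ t in F, 1 - e' * (t.1 0 + β' * (1 - t.1 1)) ≤ t.2)
    (hright' : ∀ᶠ t in F, 1 - s * (1 - t.1 0 + β * (1 - t.1 1)) ≤ t.2)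
    (hleft' : ∀ᶠ t in F, 1 - s' * (t.1 0 + β' * (1 - t.1 1)) ≤ t.2) :
    ∀ᶠ t in F, 1 ≤ t.2 := by
  have hroof : ∀ᶠ t in F, 1 - κ + 0 * t.1 0 + κ * t.1 1 ≤ t.2 := by
    refine hF.of_vertical_split 0 _ _ _ ?_
    filter_upwards [hright, hleft, hright', hleft'] with t hright hleft hright' hleft' hsplit
    simp only [Int.cast_zero, zero_add] at hsplit
    suffices 1 - κ * (1 - t.1 1) ≤ t.2 by linarith
    rcases hsplit with hx | hx
    · refine one_sub_mul_one_sub_le hsκ' hκe' ?_ ?_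
      · linarith [mul_nonpos_of_nonneg_of_nonpos hs' hx]
      · linarith [mul_nonpos_of_nonneg_of_nonpos he' hx]
    · refine one_sub_mul_one_sub_le hsκ hκe ?_ ?_
      · linarith [mul_nonneg hs (sub_nonneg.2 hx)]
      · linarith [mul_nonneg he (sub_nonneg.2 hx)]
  have key := hF.of_horizontal_split 1 0 0 ?_
  · simpa using key
  filter_upwards [hbase, hroof] with t hbase hroof hsplit
  rcases hsplit with hy | hy
  · linarith [mul_nonpos_of_nonneg_of_nonpos hM hy]
  · linarith [mul_nonneg hκ (sub_nonneg.2 hy)]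

lemma corner_floor (hF : SplitClosed F) {s e M : ℝ} (hs : 0 ≤ s) (he : 0 ≤ e) (hsM : s ≤ M)
    (hbase : ∀ᶠ t in F, 1 - M * t.1 1 ≤ t.2) (hleft : ∀ᶠ t in F, 1 - e * t.1 0 ≤ t.2)
    (hceil : ∀ᶠ t in F, 1 ≤ t.1 1 → 1 - s * (1 - t.1 0) ≤ t.2) :
    ∀ᶠ t in F, 1 - s * t.1 1 ≤ t.2 := by
  have key := hF.of_horizontal_split 1 0 (-s) ?_
  · filter_upwards [key] with t ht
    linarith
  filter_upwards [hbase, hceil, hleft] with t hbase hceil hleft hsplit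
  rcases hsplit with hy | hy
  · linarith [mul_le_mul_of_nonpos_right hsM hy]
  rcases le_total 0 (t.1 0) with hx | hx
  · linarith [hceil hy, mul_nonneg hs hx, mul_nonneg hs (sub_nonneg.2 hy)]
  · linarith [mul_nonpos_of_nonneg_of_nonpos he hx, mul_nonneg hs (zero_le_one.trans hy)]

lemma corner_wall (hF : SplitClosed F) {s M d : ℝ} (hs : 0 ≤ s) (hsM : 2 * s ≤ M)
    (hsd : 2 * s ≤ d) (hbase : ∀ᶠ t in F, 1 - M * t.1 1 ≤ t.2)
    (hfar : ∀ᶠ t in F, 2 ≤ t.1 0 → 1 + d * (t.1 0 - 1) ≤ t.2)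
    (hfloor : ∀ᶠ t in F, 1 - s * t.1 1 ≤ t.2)
    (hceil : ∀ᶠ t in F, 1 ≤ t.1 1 → 1 - s * (1 - t.1 0) ≤ t.2) :
    ∀ᶠ t in F, 1 - s * (1 - t.1 0) ≤ t.2 := by
  have htilted : ∀ᶠ t in F, 1 - s + s * t.1 0 + -s * t.1 1 ≤ t.2 := by
    refine hF.of_vertical_split 1 _ _ _ ?_
    filter_upwards [hbase, hfloor, hfar] with t hbase hfloor hfar hsplit
    rw [Int.cast_one, one_add_one_eq_two] at hsplit
    rcases hsplit with hx | hx
    · linarith [mul_nonneg hs (sub_nonneg.2 hx)]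
    have hx1 : 0 ≤ t.1 0 - 1 := by linarith
    have hfar := hfar hx
    have hdx := mul_le_mul_of_nonneg_right hsd hx1
    rcases le_total 0 (t.1 1) with hy | hy
    · linarith [mul_nonneg hs hy, mul_nonneg hs hx1]
    · linarith [mul_le_mul_of_nonpos_right hsM hy]
  have key := hF.of_horizontal_split (1 - s) s 0 ?_
  · filter_upwards [key] with t ht
    linarith
  filter_upwards [htilted, hceil] with t htilted hceil hsplit
  rcases hsplit with hy | hy
  · linarith [mul_nonpos_of_nonneg_of_nonpos hs hy]
  · linarith [hceil hy]

lemma one_le_of_corner (hF : SplitClosed F) {β s e M d : ℝ} (hβ : 0 ≤ β) (hs : 0 ≤ s)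
    (he : 0 ≤ e) (hsM : 2 * s ≤ M) (hsd : 2 * s ≤ d)
    (hbase : ∀ᶠ t in F, 1 - M * t.1 1 ≤ t.2) (hleft : ∀ᶠ t in F, 1 - e * t.1 0 ≤ t.2)
    (hfar : ∀ᶠ t in F, 2 ≤ t.1 0 → 1 + d * (t.1 0 - 1) ≤ t.2)
    (hright : ∀ᶠ t in F, 1 - s * (1 - t.1 0 + β * (1 - t.1 1)) ≤ t.2) :
    ∀ᶠ t in F, 1 ≤ t.2 := by
  have hceil : ∀ᶠ t in F, 1 ≤ t.1 1 → 1 - s * (1 - t.1 0) ≤ t.2 := by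
    filter_upwards [hright] with t hright hy
    linarith [mul_nonneg (mul_nonneg hs hβ) (sub_nonneg.2 hy)]
  have hfloor := hF.corner_floor hs he (by linarith) hbase hleft hceil
  have hwall := hF.corner_wall hs hsM hsd hbase hfar hfloor hceil
  have key := hF.of_vertical_split 0 1 0 0 ?_
  · simpa using key
  filter_upwards [hwall, hleft] with t hwall hleft hsplit
  simp only [Int.cast_zero, zero_add] at hsplit
  rcases hsplit with hx | hx
  · linarith [mul_nonpos_of_nonneg_of_nonpos he hx]
  · linarith [mul_nonneg hs (sub_nonneg.2 hx)]

end SplitClosed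

lemma exists_mem_interior_eq {E : Type*} [AddCommGroup E] [Module ℝ E] [TopologicalSpace E]
    [IsTopologicalAddGroup E] [ContinuousSMul ℝ E] {s : Set E} (hs : Convex ℝ s)
    (hint : (interior s).Nonempty) {g : E → ℝ} (hg : Continuous g) {a b : E} (ha : a ∈ s)
    (hb : b ∈ s) {m : ℝ} (ham : g a < m) (hmb : m < g b) : ∃ z ∈ interior s, g z = m := by
  have hdense : s ⊆ closure (interior s) :=
    (hs.closure_interior_eq_closure_of_nonempty_interior hint).symm ▸ subset_closure
  obtain ⟨a', ha', haint⟩ := mem_closure_iff.1 (hdense ha) _ (isOpen_lt hg continuous_const) ham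
  obtain ⟨b', hb', hbint⟩ := mem_closure_iff.1 (hdense hb) _ (isOpen_lt continuous_const hg) hmb
  exact hs.interior.isPreconnected.intermediate_value haint hbint hg.continuousOn
    ⟨le_of_lt ha', le_of_lt hb'⟩

lemma exists_support {L : Set Pt} (hL : Convex ℝ L) (hint : (interior L).Nonempty) {m : Pt}
    (hm : m ∉ interior L) :
    ∃ b c : ℝ, (b ≠ 0 ∨ c ≠ 0) ∧ ∀ x ∈ L, 0 ≤ b * (x 0 - m 0) + c * (x 1 - m 1) := by
  obtain ⟨φ, hφ, hmax⟩ := geometric_hahn_banach_of_nonempty_interior_point hL hm hint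
  have hcoord : ∀ x, φ x = x 0 * φ (Pi.single 0 1) + x 1 * φ (Pi.single 1 1) := fun x => by
    conv_lhs => rw [pi_eq_sum_univ' x]
    simp
  refine ⟨-φ (Pi.single 0 1), -φ (Pi.single 1 1), ?_, fun x hx => ?_⟩
  · by_contra! h
    exact hφ (ContinuousLinearMap.ext fun x => by
      rw [hcoord, neg_eq_zero.1 h.1, neg_eq_zero.1 h.2]
      simp)
  · linarith [hmax x hx, hcoord x, hcoord m]

lemma exists_right_support {L : Set Pt} (hL : Convex ℝ L) (h10 : ![1, 0] ∈ L)
    (h11 : ![1, 1] ∉ interior L) {ξ : ℝ} (hξ1 : ξ < 1) (hξ : ![ξ, 1] ∈ interior L) :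
    ∃ β : ℝ, 0 ≤ β ∧ ∀ x ∈ L, 0 ≤ 1 - x 0 + β * (1 - x 1) := by
  obtain ⟨b, c, hbc, hsupp⟩ := exists_support hL ⟨_, hξ⟩ h11
  have hlt := affForm_pos_of_mem_interior hξ hbc (a := -b - c) fun x hx => by
    have := hsupp x hx
    simp only [Matrix.cons_val_zero, Matrix.cons_val_one, Matrix.cons_val_fin_one] at this
    linarith
  have hc := hsupp _ h10
  simp only [affForm_apply, Matrix.cons_val_zero, Matrix.cons_val_one, Matrix.cons_val_fin_one,
    sub_self, mul_zero] at hlt hc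
  have hb : b < 0 := by nlinarith
  refine ⟨c / b, div_nonneg_of_nonpos (by linarith) hb.le, fun x hx => ?_⟩
  have hx' : 1 - x 0 + c / b * (1 - x 1) = (b * (x 0 - 1) + c * (x 1 - 1)) / -b := by
    field_simp [hb.ne]
    ring
  rw [hx']
  exact div_nonneg (by simpa using hsupp x hx) (neg_pos.2 hb).le

/-- The affine automorphisms of the plane that preserve the integer lattice. -/
def IsLatticeEquiv (e : Pt ≃ᴬ[ℝ] Pt) : Prop :=
  ∀ x, IsIntPt (e x) ↔ IsIntPt x

lemma isIntPt_pi_affForm (a b c a' b' c' : ℤ) {x : Pt} (hx : IsIntPt x) :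
    IsIntPt (AffineMap.pi ![affForm a b c, affForm a' b' c'] x) := fun j => by
  fin_cases j
  exacts [isIntegralForm_affForm a b c x hx, isIntegralForm_affForm a' b' c' x hx]

lemma exists_isLatticeEquiv (a b c d u v : ℤ) (h : IsUnit (a * d - b * c)) :
    ∃ e : Pt ≃ᴬ[ℝ] Pt, IsLatticeEquiv e ∧
      ∀ x, e x = ![u + a * x 0 + b * x 1, v + c * x 0 + d * x 1] := by
  obtain ⟨δ, hδ⟩ := h.exists_right_inv
  have hδ' : ((a : ℝ) * d - b * c) * δ = 1 := by exact_mod_cast hδ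
  let S : Pt →ᵃ[ℝ] Pt := AffineMap.pi ![affForm u a b, affForm v c d]
  let T : Pt →ᵃ[ℝ] Pt := AffineMap.pi ![affForm (δ * (b * v - d * u) : ℤ) (δ * d : ℤ) (-δ * b : ℤ),
    affForm (δ * (c * u - a * v) : ℤ) (-δ * c : ℤ) (δ * a : ℤ)]
  have hTS : Function.LeftInverse T S := fun x => by
    ext j
    fin_cases j <;> simp only [S, T, AffineMap.pi_apply, affForm_apply, Fin.zero_eta, Fin.mk_one,
      Matrix.cons_val_zero, Matrix.cons_val_one, Matrix.cons_val_fin_one] <;> push_cast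
    · linear_combination x 0 * hδ'
    · linear_combination x 1 * hδ'
  have hST : Function.RightInverse T S := fun x => by
    ext j
    fin_cases j <;> simp only [S, T, AffineMap.pi_apply, affForm_apply, Fin.zero_eta, Fin.mk_one,
      Matrix.cons_val_zero, Matrix.cons_val_one, Matrix.cons_val_fin_one] <;> push_cast
    · linear_combination (x 0 - u) * hδ'
    · linear_combination (x 1 - v) * hδ'
  let e : Pt ≃ᵃ[ℝ] Pt := AffineEquiv.ofBijective (φ := S) ⟨hTS.injective, hST.surjective⟩
  have heS : ∀ x, e x = S x := fun _ => rfl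
  refine ⟨e.toContinuousAffineEquiv, fun x => ?_, fun x => ?_⟩
  · refine ⟨fun hx => ?_, isIntPt_pi_affForm u a b v c d⟩
    rw [← hTS x]
    exact isIntPt_pi_affForm _ _ _ _ _ _ hx
  · refine (heS x).trans ?_
    ext j
    fin_cases j <;> simp [S]

/-- Some segment between two extreme points of `L` has no lattice point in its relative interior, as
is the case for one of the sides of a quadrilateral of type `Q¹`. -/
def HasLatticeFreeSide (L : Set Pt) : Prop :=
  ∃ x ∈ extremePoints ℝ L, ∃ y ∈ extremePoints ℝ L, ∀ z ∈ openSegment ℝ x y, ¬ IsIntPt z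

lemma map_mem_extremePoints_image {E : Type*} [AddCommGroup E] [Module ℝ E] (e : E ≃ᵃ[ℝ] E)
    {s : Set E} {x : E} (hx : x ∈ extremePoints ℝ s) : e x ∈ extremePoints ℝ (e '' s) := by
  refine ⟨mem_image_of_mem e hx.1, ?_⟩
  rintro - ⟨a, ha, rfl⟩ - ⟨b, hb, rfl⟩ hab
  obtain ⟨c, hc, hcx⟩ := (image_openSegment ℝ e.toAffineMap a b).ge hab
  exact congrArg e (hx.2 ha hb (e.injective hcx ▸ hc))

namespace IsLatticeEquiv

variable {e : Pt ≃ᴬ[ℝ] Pt} {L : Set Pt}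

lemma trans {e' : Pt ≃ᴬ[ℝ] Pt} (he : IsLatticeEquiv e) (he' : IsLatticeEquiv e') :
    IsLatticeEquiv (e.trans e') := fun x => (he' _).trans (he x)

lemma isIntegralForm_comp (he : IsLatticeEquiv e) {h : Pt →ᵃ[ℝ] ℝ} (hh : IsIntegralForm h) :
    IsIntegralForm (h.comp e.toAffineMap) := fun x hx => hh _ ((he x).2 hx)

lemma latticeFree_image (he : IsLatticeEquiv e) (hL : LatticeFree L) : LatticeFree (e '' L) := by
  intro x hx
  obtain ⟨y, hy, rfl⟩ := (e.toHomeomorph.image_interior L).ge hx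
  exact fun h => hL y hy ((he y).1 h)

lemma hasLatticeFreeSide_image (he : IsLatticeEquiv e) (hL : HasLatticeFreeSide L) :
    HasLatticeFreeSide (e '' L) := by
  obtain ⟨x, hx, y, hy, hxy⟩ := hL
  refine ⟨e x, map_mem_extremePoints_image e.toAffineEquiv hx,
    e y, map_mem_extremePoints_image e.toAffineEquiv hy, fun z hz => ?_⟩
  obtain ⟨w, hw, rfl⟩ := (image_openSegment ℝ e.toAffineMap x y).ge hz
  exact fun h => hxy w hw ((he w).1 h)

end IsLatticeEquiv

/-- A compact convex lattice-free set `L` around `f`, together with a split closed filter in which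
the intersection cuts of `L` hold eventually. -/
structure IsCutSystem (F : Filter (Pt × ℝ)) (L : Set Pt) (f : Pt) : Prop where
  splitClosed : SplitClosed F
  isCompact : IsCompact L
  convex : Convex ℝ L
  latticeFree : LatticeFree L
  mem_interior : f ∈ interior L
  eventually_le : ∀ ℓ : Pt →ᵃ[ℝ] ℝ, ℓ f = 0 → (∀ x ∈ L, ℓ x ≤ 1) → ∀ᶠ t in F, ℓ t.1 ≤ t.2

namespace IsCutSystem

variable {F : Filter (Pt × ℝ)} {L : Set Pt} {f : Pt}

lemma map (hF : IsCutSystem F L f) {e : Pt ≃ᴬ[ℝ] Pt} (he : IsLatticeEquiv e) :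
    IsCutSystem (F.map (Prod.map e id)) (e '' L) (e f) where
  splitClosed _ hh ℓ hℓ := hF.splitClosed _ (he.isIntegralForm_comp hh) (ℓ.comp e.toAffineMap) hℓ
  isCompact := hF.isCompact.image e.continuous
  convex := hF.convex.affine_image e.toAffineMap
  latticeFree := he.latticeFree_image hF.latticeFree
  mem_interior := (e.toHomeomorph.image_interior L).le (mem_image_of_mem e hF.mem_interior)
  eventually_le ℓ hf hL := hF.eventually_le (ℓ.comp e.toAffineMap) hf (forall_mem_image.1 hL)

lemma eventually_nonneg (hF : IsCutSystem F L f) : ∀ᶠ t in F, 0 ≤ t.2 := by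
  simpa using hF.eventually_le 0 rfl fun _ _ => zero_le_one

lemma exists_slope (hF : IsCutSystem F L f) (a b c : ℝ) (hbc : b ≠ 0 ∨ c ≠ 0)
    (hL : ∀ x ∈ L, 0 ≤ a + b * x 0 + c * x 1) :
    ∃ e, 0 < e ∧ ∀ᶠ t in F, 1 - e * (a + b * t.1 0 + c * t.1 1) ≤ t.2 := by
  have hpos := affForm_pos_of_mem_interior hF.mem_interior hbc hL
  refine ⟨(affForm a b c f)⁻¹, inv_pos.2 hpos, ?_⟩
  have key := hF.eventually_le (AffineMap.const ℝ Pt 1 - (affForm a b c f)⁻¹ • affForm a b c)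
    (by simp [-affForm_apply, inv_mul_cancel₀ hpos.ne'])
    fun x hx => sub_le_self 1 (mul_nonneg (inv_nonneg.2 hpos.le) ?_)
  · filter_upwards [key] with t ht
    rw [← affForm_apply]
    exact ht
  · rw [affForm_apply]
    exact hL x hx

lemma exists_height_slope (hF : IsCutSystem F L f) :
    ∃ c Y : ℝ, 0 < c ∧ 0 < Y ∧ ∀ᶠ t in F, Y ≤ t.1 1 - 1 → 1 + c * (t.1 1 - 1) ≤ t.2 := by
  obtain ⟨R, hR⟩ := (hF.isCompact.image (continuous_apply 1)).bddAbove
  obtain ⟨e, he, hslope⟩ := hF.exists_slope (max R 2) 0 (-1) (by simp) fun x hx => by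
    linarith [hR (mem_image_of_mem _ hx), le_max_left R 2]
  have hR2 := le_max_right R 2
  refine ⟨e / 2, 2 * (max R 2 - 1), by positivity, by linarith, ?_⟩
  filter_upwards [hslope] with t ht hy
  nlinarith

lemma exists_floor_slope (hF : IsCutSystem F L f) (hy : ∀ x ∈ L, 0 ≤ x 1) :
    ∃ e, 0 < e ∧ ∀ᶠ t in F, 1 - e * t.1 1 ≤ t.2 := by
  simpa using hF.exists_slope 0 0 1 (by simp) (by simpa using hy)

lemma exists_right_slope (hF : IsCutSystem F L f) {β : ℝ}
    (hright : ∀ x ∈ L, 0 ≤ 1 - x 0 + β * (1 - x 1)) :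
    ∃ e, 0 < e ∧ ∀ᶠ t in F, 1 - e * (1 - t.1 0 + β * (1 - t.1 1)) ≤ t.2 := by
  obtain ⟨e, he, h⟩ := hF.exists_slope (1 + β) (-1) (-β) (by simp) fun x hx => by
    linarith [hright x hx]
  exact ⟨e, he, h.mono fun t ht => by linarith⟩

lemma exists_left_slope (hF : IsCutSystem F L f) {β : ℝ}
    (hleft : ∀ x ∈ L, 0 ≤ x 0 + β * (1 - x 1)) :
    ∃ e, 0 < e ∧ ∀ᶠ t in F, 1 - e * (t.1 0 + β * (1 - t.1 1)) ≤ t.2 := by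
  obtain ⟨e, he, h⟩ := hF.exists_slope β 1 (-β) (by simp) fun x hx => by
    linarith [hleft x hx]
  exact ⟨e, he, h.mono fun t ht => by linarith⟩

lemma exists_slope_le_mul_deficit (hF : IsCutSystem F L f) (hy : ∀ x ∈ L, 0 ≤ x 1) {β : ℝ}
    (hright : ∀ x ∈ L, 0 ≤ 1 - x 0 + β * (1 - x 1)) :
    ∃ P : ℝ, 0 < P ∧ ∀ D, 0 < D → (∀ᶠ t in F, 1 - D ≤ t.2) →
      ∃ s, 0 < s ∧ s ≤ P * D ∧ ∀ᶠ t in F, 1 - s * (1 - t.1 0 + β * (1 - t.1 1)) ≤ t.2 := by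
  obtain ⟨M, hM, hbase⟩ := hF.exists_floor_slope hy
  obtain ⟨e, he, hslope⟩ := hF.exists_right_slope hright
  obtain ⟨c, Y, hc, hY, hheight⟩ := hF.exists_height_slope
  obtain ⟨p, q, hp, hpq, hpqδ⟩ :=
    exists_int_mul_sub_mem_Icc β (lt_min (one_div_pos.2 (mul_pos two_pos hY)) (div_pos hc he))
  obtain ⟨hpqY, hpqc⟩ := le_min_iff.1 hpqδ
  rw [le_div_iff₀ (by positivity)] at hpqY
  rw [le_div_iff₀ he] at hpqc
  have hp1 : (1 : ℝ) ≤ p := by exact_mod_cast hp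
  refine ⟨4 * p, by positivity, fun D hD hdeficit => ?_⟩
  refine hF.splitClosed.exists_slope_le (c := c) hp he hM.le hD hpq ?_ hbase ?_ hdeficit hslope
  · linarith [le_mul_of_one_le_right hc.le hp1]
  · filter_upwards [hheight] with t ht hu
    refine ht (not_lt.1 fun hlt => ?_)
    linarith [mul_le_mul_of_nonneg_left hlt.le hpq]

lemma exists_left_slope_le_mul_deficit (hF : IsCutSystem F L f) (hy : ∀ x ∈ L, 0 ≤ x 1) {β : ℝ}
    (hleft : ∀ x ∈ L, 0 ≤ x 0 + β * (1 - x 1)) :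
    ∃ P : ℝ, 0 < P ∧ ∀ D, 0 < D → (∀ᶠ t in F, 1 - D ≤ t.2) →
      ∃ s, 0 < s ∧ s ≤ P * D ∧ ∀ᶠ t in F, 1 - s * (t.1 0 + β * (1 - t.1 1)) ≤ t.2 := by
  obtain ⟨ρ, hρ, hρx⟩ := exists_isLatticeEquiv (-1) 0 0 1 1 0 (by norm_num)
  obtain ⟨P, hP, hslope⟩ := (hF.map hρ).exists_slope_le_mul_deficit (β := β)
    (by simpa [hρx] using hy) (by simpa [hρx] using hleft)
  exact ⟨P, hP, by simpa [hρx, Filter.eventually_map] using hslope⟩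

lemma eventually_one_sub_le (hF : IsCutSystem F L f) (hy : ∀ x ∈ L, 0 ≤ x 1) {β β' : ℝ}
    (hβ : 0 ≤ β) (hβ' : 0 ≤ β') (hright : ∀ x ∈ L, 0 ≤ 1 - x 0 + β * (1 - x 1))
    (hleft : ∀ x ∈ L, 0 ≤ x 0 + β' * (1 - x 1)) {D : ℝ} (hD : 0 < D) :
    ∀ᶠ t in F, 1 - D ≤ t.2 := by
  obtain ⟨M, hM, hbase⟩ := hF.exists_floor_slope hy
  obtain ⟨P, hP, hslope⟩ := hF.exists_slope_le_mul_deficit hy hright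
  obtain ⟨P', hP', hslope'⟩ := hF.exists_left_slope_le_mul_deficit hy hleft
  have hPβ : 0 ≤ P * β := by positivity
  have hPβ' : 0 ≤ P' * β' := by positivity
  set K : ℝ := P * β + P' * β' + 1
  have hK0 : 0 < K := by positivity
  obtain ⟨D', -, hD', h⟩ := exists_le_of_contracting (P := fun D => ∀ᶠ t in F, 1 - D ≤ t.2)
    (θ := K / (1 + K)) (by positivity) ((div_lt_one (by positivity)).2 (by linarith)) hD one_pos
    (by simpa using hF.eventually_nonneg) fun E hDE _ hdeficit => by
      have hE : 0 < E := hD.trans_le hDE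
      obtain ⟨s, hs, hsP, hs'⟩ := hslope E hE hdeficit
      obtain ⟨s', hs₀', hsP', hs''⟩ := hslope' E hE hdeficit
      refine hF.splitClosed.deficit_step hM.le hK0.le hE.le hs.le hs₀'.le hβ hβ' ?_ ?_ hbase
        hdeficit hs' hs''
      · nlinarith [mul_nonneg hPβ' hE.le]
      · nlinarith [mul_nonneg hPβ hE.le]
  exact h.mono fun t ht => by linarith

lemma exists_slope_le (hF : IsCutSystem F L f) (hy : ∀ x ∈ L, 0 ≤ x 1) {β β' : ℝ}
    (hβ : 0 ≤ β) (hβ' : 0 ≤ β') (hright : ∀ x ∈ L, 0 ≤ 1 - x 0 + β * (1 - x 1))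
    (hleft : ∀ x ∈ L, 0 ≤ x 0 + β' * (1 - x 1)) {δ : ℝ} (hδ : 0 < δ) :
    ∃ s, 0 < s ∧ s ≤ δ ∧ ∀ᶠ t in F, 1 - s * (1 - t.1 0 + β * (1 - t.1 1)) ≤ t.2 := by
  obtain ⟨P, hP, hslope⟩ := hF.exists_slope_le_mul_deficit hy hright
  obtain ⟨s, hs, hsP, h⟩ := hslope (δ / P) (div_pos hδ hP)
    (hF.eventually_one_sub_le hy hβ hβ' hright hleft (div_pos hδ hP))
  exact ⟨s, hs, by rwa [mul_div_cancel₀ _ hP.ne'] at hsP, h⟩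

lemma exists_left_slope_le (hF : IsCutSystem F L f) (hy : ∀ x ∈ L, 0 ≤ x 1) {β β' : ℝ}
    (hβ : 0 ≤ β) (hβ' : 0 ≤ β') (hright : ∀ x ∈ L, 0 ≤ 1 - x 0 + β * (1 - x 1))
    (hleft : ∀ x ∈ L, 0 ≤ x 0 + β' * (1 - x 1)) {δ : ℝ} (hδ : 0 < δ) :
    ∃ s, 0 < s ∧ s ≤ δ ∧ ∀ᶠ t in F, 1 - s * (t.1 0 + β' * (1 - t.1 1)) ≤ t.2 := by
  obtain ⟨P, hP, hslope⟩ := hF.exists_left_slope_le_mul_deficit hy hleft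
  obtain ⟨s, hs, hsP, h⟩ := hslope (δ / P) (div_pos hδ hP)
    (hF.eventually_one_sub_le hy hβ hβ' hright hleft (div_pos hδ hP))
  exact ⟨s, hs, by rwa [mul_div_cancel₀ _ hP.ne'] at hsP, h⟩

lemma one_le_of_pos_slopes (hF : IsCutSystem F L f) (hy : ∀ x ∈ L, 0 ≤ x 1) {β β' : ℝ}
    (hβ : 0 < β) (hβ' : 0 < β') (hright : ∀ x ∈ L, 0 ≤ 1 - x 0 + β * (1 - x 1))
    (hleft : ∀ x ∈ L, 0 ≤ x 0 + β' * (1 - x 1)) : ∀ᶠ t in F, 1 ≤ t.2 := by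
  obtain ⟨M, hM, hbase⟩ := hF.exists_floor_slope hy
  obtain ⟨e, he, hslope⟩ := hF.exists_right_slope hright
  obtain ⟨e', he', hslope'⟩ := hF.exists_left_slope hleft
  set κ : ℝ := min (e * β) (e' * β')
  have hκ0 : 0 < κ := lt_min (mul_pos he hβ) (mul_pos he' hβ')
  obtain ⟨s, hs, hsκ, hsmall⟩ :=
    hF.exists_slope_le hy hβ.le hβ'.le hright hleft (div_pos hκ0 hβ)
  obtain ⟨s', hs', hsκ', hsmall'⟩ :=
    hF.exists_left_slope_le hy hβ.le hβ'.le hright hleft (div_pos hκ0 hβ')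
  refine hF.splitClosed.one_le_of_small_slopes hM.le he.le he'.le hs.le hs'.le hκ0.le
    (min_le_left _ _) (min_le_right _ _) ((le_div_iff₀ hβ).1 hsκ) ((le_div_iff₀ hβ').1 hsκ')
    hbase hslope hslope' hsmall hsmall'

lemma exists_far_slope (hF : IsCutSystem F L f) (hx : ∀ x ∈ L, x 0 < 2) :
    ∃ d, 0 < d ∧ ∀ᶠ t in F, 2 ≤ t.1 0 → 1 + d * (t.1 0 - 1) ≤ t.2 := by
  obtain ⟨x₀, hx₀, hmax⟩ := hF.isCompact.exists_isMaxOn ⟨f, interior_subset hF.mem_interior⟩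
    (continuous_apply 0).continuousOn
  set ξ : ℝ := max 1 (x₀ 0)
  have hξ1 : 1 ≤ ξ := le_max_left _ _
  have hξ2 : ξ < 2 := max_lt one_lt_two (hx x₀ hx₀)
  obtain ⟨d, hd, hslope⟩ := hF.exists_slope ξ (-1) 0 (by simp) fun x hxL => by
    have : x 0 ≤ x₀ 0 := hmax hxL
    linarith [le_max_right 1 (x₀ 0)]
  refine ⟨d * (2 - ξ), mul_pos hd (sub_pos.2 hξ2), ?_⟩
  filter_upwards [hslope] with t ht hx2
  have : 0 ≤ d * ((ξ - 1) * (t.1 0 - 2)) :=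
    mul_nonneg hd.le (mul_nonneg (sub_nonneg.2 hξ1) (sub_nonneg.2 hx2))
  linarith

lemma one_le_of_corner (hF : IsCutSystem F L f) (hx : ∀ x ∈ L, 0 ≤ x 0) (hy : ∀ x ∈ L, 0 ≤ x 1)
    (hx2 : ∀ x ∈ L, x 0 < 2) {β : ℝ} (hβ : 0 ≤ β)
    (hright : ∀ x ∈ L, 0 ≤ 1 - x 0 + β * (1 - x 1)) : ∀ᶠ t in F, 1 ≤ t.2 := by
  obtain ⟨M, hM, hbase⟩ := hF.exists_floor_slope hy
  obtain ⟨e, he, hwall⟩ := hF.exists_left_slope (β := 0) (by simpa using hx)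
  obtain ⟨d, hd, hfar⟩ := hF.exists_far_slope hx2
  obtain ⟨s, hs, hsδ, hslope⟩ := hF.exists_slope_le hy hβ le_rfl hright (by simpa using hx)
    (lt_min (half_pos hM) (half_pos hd))
  obtain ⟨hsM, hsd⟩ := le_min_iff.1 hsδ
  exact hF.splitClosed.one_le_of_corner hβ hs.le he.le (by linarith) (by linarith) hbase
    (by simpa using hwall) hfar hslope

lemma one_le_of_flat (hF : IsCutSystem F L f) (hy : ∀ x ∈ L, 0 ≤ x 1) (hy1 : ∀ x ∈ L, x 1 ≤ 1) :
    ∀ᶠ t in F, 1 ≤ t.2 := by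
  obtain ⟨e, he, hfloor⟩ := hF.exists_floor_slope hy
  obtain ⟨e', he', hceil⟩ := hF.exists_slope 1 0 (-1) (by simp) fun x hx => by linarith [hy1 x hx]
  have key := hF.splitClosed.of_horizontal_split 1 0 0 ?_
  · simpa using key
  filter_upwards [hfloor, hceil] with t hfloor hceil hsplit
  rcases hsplit with hy | hy
  · linarith [mul_nonpos_of_nonneg_of_nonpos he.le hy]
  · linarith [mul_nonneg he'.le (sub_nonneg.2 hy)]

end IsCutSystem

lemma not_hasLatticeFreeSide_convexHull {ι : Type*} (w : ι → Fin 2 → ℤ) :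
    ¬ HasLatticeFreeSide (convexHull ℝ (range fun i l => (2 * w i l : ℝ))) := by
  rintro ⟨x, hx, y, hy, hxy⟩
  obtain ⟨i, rfl⟩ := extremePoints_convexHull_subset hx
  obtain ⟨j, rfl⟩ := extremePoints_convexHull_subset hy
  refine hxy _ ⟨1 / 2, 1 / 2, by norm_num, by norm_num, by norm_num, rfl⟩ fun l => ?_
  refine ⟨w i l + w j l, ?_⟩
  simp

lemma not_hasLatticeFreeSide_triangle {L : Set Pt} (hL : Convex ℝ L) (h00 : ![0, 0] ∈ L)
    (h20 : ![2, 0] ∈ L) (h02 : ![0, 2] ∈ L) (hx : ∀ x ∈ L, 0 ≤ x 0) (hy : ∀ x ∈ L, 0 ≤ x 1)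
    (hxy : ∀ x ∈ L, x 0 + x 1 ≤ 2) : ¬ HasLatticeFreeSide L := by
  set w : Fin 3 → Fin 2 → ℤ := ![![0, 0], ![1, 0], ![0, 1]]
  suffices L = convexHull ℝ (range fun i l => (2 * w i l : ℝ)) from
    this ▸ not_hasLatticeFreeSide_convexHull w
  refine subset_antisymm (fun x hxL => ?_) (convexHull_min (range_subset_iff.2 fun i => ?_) hL)
  · have hx' : x = ∑ i, ![1 - x 0 / 2 - x 1 / 2, x 0 / 2, x 1 / 2] i •
        (fun l => (2 * w i l : ℝ)) := by
      ext l
      fin_cases l <;> simp [Fin.sum_univ_three, w]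
    rw [hx']
    refine (convex_convexHull ℝ _).sum_mem (fun i _ => ?_) ?_
      fun i _ => subset_convexHull ℝ _ (mem_range_self i)
    · fin_cases i <;> simp only [Fin.zero_eta, Fin.mk_one, Fin.reduceFinMk, Matrix.cons_val]
      all_goals linarith [hx x hxL, hy x hxL, hxy x hxL]
    · simp only [Fin.sum_univ_three, Matrix.cons_val]
      ring
  · have key : (fun l => (2 * w i l : ℝ)) = ![![0, 0], ![2, 0], ![0, 2]] i := by
      ext l
      fin_cases i <;> fin_cases l <;> simp [w]
    rw [key]
    fin_cases i
    exacts [h00, h20, h02]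

namespace IsCutSystem

variable {F : Filter (Pt × ℝ)} {L : Set Pt} {f : Pt}

lemma one_le_of_upper_corner (hF : IsCutSystem F L f) (hx : ∀ x ∈ L, 0 ≤ x 0)
    (hy : ∀ x ∈ L, 0 ≤ x 1) (hy2 : ∀ x ∈ L, x 1 < 2) {β : ℝ} (hβ : 0 < β)
    (hright : ∀ x ∈ L, 0 ≤ 1 - x 0 + β * (1 - x 1)) : ∀ᶠ t in F, 1 ≤ t.2 := by
  obtain ⟨σ, hσ, hσx⟩ := exists_isLatticeEquiv 0 1 1 0 0 0 (by norm_num)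
  have key := (hF.map hσ).one_le_of_corner (β := β⁻¹) (by simpa [hσx] using hy)
    (by simpa [hσx] using hx) (by simpa [hσx] using hy2) (by positivity) ?_
  · simpa [Filter.eventually_map] using key
  · simp only [forall_mem_image, hσx]
    intro x hxL
    have : 1 - x 1 + β⁻¹ * (1 - x 0) = β⁻¹ * (1 - x 0 + β * (1 - x 1)) := by
      field_simp
      ring
    simpa [this] using mul_nonneg (inv_nonneg.2 hβ.le) (hright x hxL)

lemma one_le_of_quadrant (hF : IsCutSystem F L f) (hside : HasLatticeFreeSide L)
    (hx : ∀ x ∈ L, 0 ≤ x 0) (hy : ∀ x ∈ L, 0 ≤ x 1) (h00 : ![0, 0] ∈ L) {β : ℝ} (hβ : 0 ≤ β)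
    (hright : ∀ x ∈ L, 0 ≤ 1 - x 0 + β * (1 - x 1)) : ∀ᶠ t in F, 1 ≤ t.2 := by
  by_cases hx2 : ∀ x ∈ L, x 0 < 2
  · exact hF.one_le_of_corner hx hy hx2 hβ hright
  push Not at hx2
  obtain ⟨a, ha, ha2⟩ := hx2
  have hβ1 : 1 ≤ β := by
    have := mul_nonneg hβ (hy a ha)
    linarith [hright a ha]
  by_cases hy2 : ∀ x ∈ L, x 1 < 2
  · exact hF.one_le_of_upper_corner hx hy hy2 (one_pos.trans_le hβ1) hright
  push Not at hy2
  obtain ⟨b, hb, hb2⟩ := hy2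
  obtain rfl : β = 1 := by
    refine le_antisymm ?_ hβ1
    nlinarith [hright b hb, hx b hb]
  have ha' : a = ![2, 0] := by
    ext l
    fin_cases l <;> simp only [Fin.zero_eta, Fin.mk_one, Matrix.cons_val] <;>
      linarith [hright a ha, hy a ha]
  have hb' : b = ![0, 2] := by
    ext l
    fin_cases l <;> simp only [Fin.zero_eta, Fin.mk_one, Matrix.cons_val] <;>
      linarith [hright b hb, hx b hb]
  exact absurd hside (not_hasLatticeFreeSide_triangle hF.convex h00 (ha' ▸ ha) (hb' ▸ hb) hx hy
    fun x hxL => by linarith [hright x hxL])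

lemma one_le_of_base (hF : IsCutSystem F L f) (hside : HasLatticeFreeSide L)
    (hy : ∀ x ∈ L, 0 ≤ x 1) (h00 : ![0, 0] ∈ L) (h10 : ![1, 0] ∈ L) {ξ : ℝ} (hξ0 : 0 < ξ)
    (hξ1 : ξ < 1) (hξ : ![ξ, 1] ∈ interior L) : ∀ᶠ t in F, 1 ≤ t.2 := by
  obtain ⟨ρ, hρ, hρx⟩ := exists_isLatticeEquiv (-1) 0 0 1 1 0 (by norm_num)
  have hF' := hF.map hρ
  have hy' : ∀ x ∈ ρ '' L, 0 ≤ x 1 := by simpa [hρx] using hy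
  have hmem {a b : ℝ} (h : ![a, b] ∈ L) : ![1 - a, b] ∈ ρ '' L :=
    ⟨_, h, by simp [hρx, sub_eq_add_neg]⟩
  have hξ' : ![1 - ξ, 1] ∈ interior (ρ '' L) :=
    (ρ.toHomeomorph.image_interior L).le ⟨_, hξ, (hρx _).trans (by simp [sub_eq_add_neg])⟩
  have h11 : IsIntPt ![1, 1] := fun j => ⟨1, by fin_cases j <;> simp⟩
  obtain ⟨β, hβ, hright⟩ := exists_right_support hF.convex h10 (fun h => hF.latticeFree _ h h11)
    hξ1 hξ
  obtain ⟨β', hβ', hleft⟩ := exists_right_support hF'.convex (by simpa using hmem h00)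
    (fun h => hF'.latticeFree _ h h11) (sub_lt_self 1 hξ0) hξ'
  have hleft' : ∀ x ∈ L, 0 ≤ x 0 + β' * (1 - x 1) := by simpa [hρx] using hleft
  rcases hβ'.eq_or_lt with rfl | hβ'0
  · exact hF.one_le_of_quadrant hside (by simpa using hleft') hy h00 hβ hright
  rcases hβ.eq_or_lt with rfl | hβ0
  · have key := hF'.one_le_of_quadrant (hρ.hasLatticeFreeSide_image hside) ?_ hy'
      (by simpa using hmem h10) hβ' hleft
    · simpa [Filter.eventually_map] using key
    · simpa [hρx, sub_eq_neg_add] using hright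
  · exact hF.one_le_of_pos_slopes hy hβ0 hβ'0 hright hleft'

lemma one_le_of_nonneg (hF : IsCutSystem F L f) (hside : HasLatticeFreeSide L)
    (hy : ∀ x ∈ L, 0 ≤ x 1) (h00 : ![0, 0] ∈ L) (h10 : ![1, 0] ∈ L) : ∀ᶠ t in F, 1 ≤ t.2 := by
  by_cases hflat : ∀ x ∈ L, x 1 ≤ 1
  · exact hF.one_le_of_flat hy hflat
  push Not at hflat
  obtain ⟨b, hb, hb1⟩ := hflat
  obtain ⟨z, hz, hz1⟩ := exists_mem_interior_eq hF.convex ⟨f, hF.mem_interior⟩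
    (continuous_apply 1) h00 hb (m := 1) (by simp) hb1
  have hfract : 0 < Int.fract (z 0) := Int.fract_pos.2 fun h =>
    hF.latticeFree z hz fun j => by
      fin_cases j
      exacts [⟨_, h⟩, ⟨1, by simpa using hz1⟩]
  obtain ⟨τ, hτ, hτx⟩ := exists_isLatticeEquiv 1 (-⌊z 0⌋) 0 1 0 0 (by norm_num)
  have hzmem : ![Int.fract (z 0), 1] ∈ interior (τ '' L) :=
    (τ.toHomeomorph.image_interior L).le
      ⟨z, hz, (hτx z).trans (by simp [hz1, Int.fract, sub_eq_add_neg])⟩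
  have key := (hF.map hτ).one_le_of_base (hτ.hasLatticeFreeSide_image hside)
    (by simpa [hτx] using hy) ⟨_, h00, by simp [hτx]⟩ ⟨_, h10, by simp [hτx]⟩ hfract
    (Int.fract_lt_one _) hzmem
  simpa [Filter.eventually_map] using key

end IsCutSystem

lemma exists_isLatticeEquiv_apply_eq {z₁ z₂ : Pt} (hne : z₁ ≠ z₂) (h₁ : IsIntPt z₁)
    (h₂ : IsIntPt z₂) :
    ∃ e : Pt ≃ᴬ[ℝ] Pt, IsLatticeEquiv e ∧ e z₁ = ![0, 0] ∧
      ∃ g : ℕ, 0 < g ∧ e z₂ = ![(g : ℝ), 0] := by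
  choose w₁ hw₁ using h₁
  choose w₂ hw₂ using h₂
  have hg : 0 < Int.gcd (w₂ 0 - w₁ 0) (w₂ 1 - w₁ 1) := by
    rw [Int.gcd_pos_iff]
    by_contra! h
    refine hne (funext fun j => ?_)
    rw [hw₁, hw₂]
    fin_cases j
    exacts [congrArg _ (sub_eq_zero.1 h.1).symm, congrArg _ (sub_eq_zero.1 h.2).symm]
  obtain ⟨a, b, hab, ha, hb⟩ := Int.exists_gcd_one hg
  obtain ⟨u, v, huv⟩ := Int.isCoprime_iff_gcd_eq_one.2 hab
  set g := Int.gcd (w₂ 0 - w₁ 0) (w₂ 1 - w₁ 1)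
  have ha' : (w₂ 0 : ℝ) - w₁ 0 = a * g := by exact_mod_cast ha
  have hb' : (w₂ 1 : ℝ) - w₁ 1 = b * g := by exact_mod_cast hb
  have huv' : (u : ℝ) * a + v * b = 1 := by exact_mod_cast huv
  obtain ⟨e, he, hex⟩ := exists_isLatticeEquiv u v (-b) a (-(u * w₁ 0 + v * w₁ 1))
    (b * w₁ 0 - a * w₁ 1) (by rw [mul_neg, sub_neg_eq_add, huv]; exact isUnit_one)
  refine ⟨e, he, ?_, g, hg, ?_⟩
  · rw [hex, hw₁ 0, hw₁ 1]
    push_cast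
    ext j
    fin_cases j <;> simp only [Fin.zero_eta, Fin.mk_one, Matrix.cons_val] <;> ring
  · rw [hex, hw₂ 0, hw₂ 1]
    push_cast
    ext j
    fin_cases j <;> simp only [Fin.zero_eta, Fin.mk_one, Matrix.cons_val]
    · linear_combination (u : ℝ) * ha' + v * hb' + g * huv'
    · linear_combination (a : ℝ) * hb' - b * ha'

lemma nonneg_or_nonpos_of_notMem_interior {L : Set Pt} (hL : Convex ℝ L)
    (hint : (interior L).Nonempty) {g m : ℝ} (h0 : ![0, 0] ∈ L) (hg : ![g, 0] ∈ L)
    (hm0 : 0 < m) (hmg : m < g) (hm : ![m, 0] ∉ interior L) :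
    (∀ x ∈ L, 0 ≤ x 1) ∨ ∀ x ∈ L, x 1 ≤ 0 := by
  obtain ⟨b, c, hbc, hsupp⟩ := exists_support hL hint hm
  have hsupp0 := hsupp _ h0
  have hsuppg := hsupp _ hg
  simp only [Matrix.cons_val_zero, Matrix.cons_val_one,
    Matrix.cons_val_fin_one, sub_self, mul_zero, add_zero] at hsupp0 hsuppg
  obtain rfl : b = 0 := by nlinarith
  have hsupp' : ∀ x ∈ L, 0 ≤ c * x 1 := fun x hx => by simpa using hsupp x hx
  rcases lt_or_gt_of_ne (hbc.resolve_left (not_not.2 rfl)) with hc | hc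
  · exact .inr fun x hx => nonpos_of_mul_nonneg_right (hsupp' x hx) hc
  · exact .inl fun x hx => nonneg_of_mul_nonneg_right (hsupp' x hx) hc

namespace IsCutSystem

variable {F : Filter (Pt × ℝ)} {L : Set Pt} {f : Pt}

theorem one_le_of_segment_subset_frontier (hF : IsCutSystem F L f) (hside : HasLatticeFreeSide L)
    {z₁ z₂ : Pt} (hne : z₁ ≠ z₂) (h₁ : IsIntPt z₁) (h₂ : IsIntPt z₂)
    (hfr : segment ℝ z₁ z₂ ⊆ frontier L) : ∀ᶠ t in F, 1 ≤ t.2 := by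
  obtain ⟨e, he, he₁, g, hg, he₂⟩ := exists_isLatticeEquiv_apply_eq hne h₁ h₂
  have hF' := hF.map he
  have hside' := he.hasLatticeFreeSide_image hside
  have hg' : (0 : ℝ) < g := Nat.cast_pos.2 hg
  have hfr' : segment ℝ ![0, 0] ![(g : ℝ), 0] ⊆ frontier (e '' L) := by
    rw [← he₁, ← he₂]
    exact (image_segment ℝ e.toAffineMap z₁ z₂).symm.trans_subset
      ((image_mono hfr).trans (e.toHomeomorph.image_frontier L).le)
  have hmem := hfr'.trans hF'.isCompact.isClosed.frontier_subset
  have hseg {x : ℝ} (h0 : 0 ≤ x) (hx : x ≤ g) : ![x, 0] ∈ segment ℝ ![0, 0] ![(g : ℝ), 0] :=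
    ⟨1 - x / g, x / g, sub_nonneg.2 ((div_le_one hg').2 hx), by positivity, by ring, by
      ext j
      fin_cases j <;> simp [hg'.ne']⟩
  have h00 := hmem (hseg le_rfl hg'.le)
  have h10 := hmem (hseg zero_le_one (Nat.one_le_cast.2 hg))
  have hsides : (∀ x ∈ e '' L, 0 ≤ x 1) ∨ ∀ x ∈ e '' L, x 1 ≤ 0 :=
    nonneg_or_nonpos_of_notMem_interior hF'.convex ⟨_, hF'.mem_interior⟩ h00
      (hmem (hseg hg'.le le_rfl)) (half_pos hg') (half_lt_self hg')
      (hfr' (hseg (half_pos hg').le (half_le_self hg'.le))).2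
  suffices ∀ᶠ t in F.map (Prod.map e id), 1 ≤ t.2 by simpa [Filter.eventually_map] using this
  rcases hsides with hy | hy
  · exact hF'.one_le_of_nonneg hside' hy h00 h10
  obtain ⟨ν, hν, hνx⟩ := exists_isLatticeEquiv 1 0 0 (-1) 0 0 (by norm_num)
  have key := (hF'.map hν).one_le_of_nonneg (hν.hasLatticeFreeSide_image hside')
    (by simpa [hνx] using hy) ⟨_, h00, by simp [hνx]⟩ ⟨_, h10, by simp [hνx]⟩
  simpa [Filter.eventually_map] using key

end IsCutSystem

section Application

variable {k : ℕ} {r : Fin k → Pt} {f : Pt} {α : Fin k → ℝ}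

lemma sum_smul_mem_coneGen {ι : Type*} [Fintype ι] {S : Set Pt} {c : ι → ℝ} {v : ι → Pt}
    (hc : ∀ i, 0 ≤ c i) (hv : ∀ i, v i ∈ S) : ∑ i, c i • v i ∈ coneGen S := by
  let e := (Fintype.equivFin ι).symm
  exact ⟨_, c ∘ e, v ∘ e, fun _ => hc _, fun _ => hv _, (e.sum_comp fun i => c i • v i).symm⟩

lemma convex_image_setOf_dotProduct_le :
    Convex ℝ ((fun s => f + Fintype.linearCombination ℝ r s) '' {s | 0 ≤ s ∧ α ⬝ᵥ s ≤ 1}) := by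
  have hconv : Convex ℝ {s : Fin k → ℝ | 0 ≤ s ∧ α ⬝ᵥ s ≤ 1} :=
    (convex_Ici 0).inter
      (convex_halfSpace_le (dotProductBilin ℝ ℝ α).isLinear 1)
  rw [← image_image (f + ·)]
  exact (hconv.linear_image _).translate f

lemma inducedSet_subset_image :
    inducedSet k r f α ⊆
      (fun s => f + Fintype.linearCombination ℝ r s) '' {s | 0 ≤ s ∧ α ⬝ᵥ s ≤ 1} := by
  rintro - ⟨y, hy, -, ⟨n, c, v, hc, hv, rfl⟩, rfl⟩
  have hhull : y ∈ (fun s => f + Fintype.linearCombination ℝ r s) '' {s | 0 ≤ s ∧ α ⬝ᵥ s ≤ 1} := by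
    refine convexHull_min ?_ convex_image_setOf_dotProduct_le hy
    rintro - (rfl | ⟨i, hi, rfl⟩)
    · exact ⟨0, by simp, by simp⟩
    · exact ⟨Pi.single i (α i)⁻¹, ⟨Pi.single_nonneg.2 (inv_nonneg.2 hi.le), by simp [hi.ne']⟩,
        by simp⟩
  obtain ⟨s, ⟨hs, hαs⟩, rfl⟩ := hhull
  choose g hαg hvg using hv
  refine ⟨s + ∑ j, c j • Pi.single (g j) 1, ⟨?_, ?_⟩, ?_⟩
  · exact add_nonneg hs (Finset.sum_nonneg fun j _ =>
      smul_nonneg (hc j) (Pi.single_nonneg.2 zero_le_one))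
  · simpa [dotProduct_add, dotProduct_sum, hαg] using hαs
  · simp [hvg, add_assoc]

lemma image_subset_inducedSet (hα : 0 ≤ α) :
    (fun s => f + Fintype.linearCombination ℝ r s) '' {s | 0 ≤ s ∧ α ⬝ᵥ s ≤ 1} ⊆
      inducedSet k r f α := by
  rintro - ⟨s, ⟨hs, hαs⟩, rfl⟩
  let w : Option (Fin k) → ℝ := fun o => o.elim (1 - α ⬝ᵥ s) fun i => α i * s i
  let y : Option (Fin k) → Pt := fun o => o.elim f fun i => f + (α i)⁻¹ • r i
  refine ⟨∑ o, w o • y o, ?_, ∑ i : {i // α i = 0}, s i • r i,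
    sum_smul_mem_coneGen (fun i => hs i) (fun i => ⟨i, i.2, rfl⟩), ?_⟩
  · refine (convex_convexHull ℝ _).sum_mem (t := Finset.univ) ?_ ?_ ?_
    · rintro (_ | i) -
      exacts [sub_nonneg.2 hαs, mul_nonneg (hα i) (hs i)]
    · simp [Fintype.sum_option, w, dotProduct]
    · rintro (_ | i) -
      · exact subset_convexHull ℝ _ (Or.inl rfl)
      · rcases (hα i).eq_or_lt with hi | hi
        · exact subset_convexHull ℝ _ (Or.inl (by simp [y, ← hi]))
        · exact subset_convexHull ℝ _ (Or.inr ⟨i, hi, rfl⟩)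
  · have hhull : ∑ o, w o • y o = f + ∑ i, (α i * s i * (α i)⁻¹) • r i := by
      simp [Fintype.sum_option, w, y, Finset.sum_add_distrib, ← Finset.sum_smul, smul_smul,
        sub_smul, dotProduct, ← add_assoc]
    have hcone : ∑ i : {i // α i = 0}, s i • r i = ∑ i, if α i = 0 then s i • r i else 0 := by
      rw [← Finset.sum_filter]
      exact (Finset.sum_subtype {i | α i = 0} (by simp) fun i => s i • r i).symm
    change _ + _ = f + ∑ i, s i • r i
    rw [hhull, hcone, add_assoc, ← Finset.sum_add_distrib]
    refine congrArg (f + ·) (Finset.sum_congr rfl fun i _ => ?_)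
    split_ifs with hi
    · simp [hi]
    · rw [mul_right_comm, mul_inv_cancel₀ hi, one_mul, add_zero]

lemma inducedSet_eq_image (hα : 0 ≤ α) :
    inducedSet k r f α =
      (fun s => f + Fintype.linearCombination ℝ r s) '' {s | 0 ≤ s ∧ α ⬝ᵥ s ≤ 1} :=
  inducedSet_subset_image.antisymm (image_subset_inducedSet hα)

lemma convex_inducedSet (hα : 0 ≤ α) : Convex ℝ (inducedSet k r f α) := by
  rw [inducedSet_eq_image hα]
  exact convex_image_setOf_dotProduct_le

lemma le_dotProduct_of_mem_relaxP (hα : 0 ≤ α) {ℓ : Pt →ᵃ[ℝ] ℝ} (hf : ℓ f = 0)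
    (hL : ∀ x ∈ inducedSet k r f α, ℓ x ≤ 1) {p : Pt × (Fin k → ℝ)} (hp : p ∈ relaxP k r f) :
    ℓ p.1 ≤ α ⬝ᵥ p.2 := by
  obtain ⟨hs, hx⟩ := hp
  refine le_of_forall_gt_imp_ge_of_dense fun t ht => ?_
  have ht0 : 0 < t := (dotProduct_nonneg_of_nonneg hα hs).trans_lt ht
  have hmem : ℓ (f + Fintype.linearCombination ℝ r (t⁻¹ • p.2)) ≤ 1 :=
    hL _ (image_subset_inducedSet hα
      ⟨t⁻¹ • p.2, ⟨smul_nonneg (inv_nonneg.2 ht0.le) hs, ?_⟩, rfl⟩)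
  · have hlin : ∀ v : Pt, ℓ (f + v) = ℓ.linear v := fun v => by
      rw [add_comm, ← vadd_eq_add, ℓ.map_vadd, hf, vadd_eq_add, add_zero]
    rw [map_smul, hlin, map_smul, smul_eq_mul, inv_mul_le_iff₀ ht0, mul_one] at hmem
    rw [hx, hlin]
    exact hmem
  · rw [dotProduct_smul, smul_eq_mul, inv_mul_le_iff₀ ht0, mul_one]
    exact ht.le

lemma ValidIneq.latticeFree (hvalid : ValidIneq k r f α 1) :
    LatticeFree (inducedSet k r f α) := by
  intro x hx hint
  obtain ⟨δ, hδ, hmem⟩ := exists_pos_add_smul_mem hx (x - f)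
  obtain ⟨s, ⟨hs, hαs⟩, hsx⟩ := inducedSet_subset_image hmem
  have hδ' : 0 < 1 + δ := by positivity
  have hxs : (1 + δ) • (x - f) = Fintype.linearCombination ℝ r s := by
    refine add_left_cancel (a := f) (.trans ?_ hsx.symm)
    module
  have h : 1 ≤ α ⬝ᵥ ((1 + δ)⁻¹ • s) := hvalid (x, (1 + δ)⁻¹ • s)
    ⟨hint, smul_nonneg (inv_nonneg.2 hδ'.le) hs, ?_⟩
  · rw [dotProduct_smul, smul_eq_mul, le_inv_mul_iff₀ hδ'] at h
    linarith
  · change x = f + Fintype.linearCombination ℝ r ((1 + δ)⁻¹ • s)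
    rw [map_smul, ← hxs, inv_smul_smul₀ hδ'.ne', add_sub_cancel]

/-- The filter generated by the tails of the sequence of split closures: a property holds eventually
if it holds on all split closures of sufficiently large order. -/
def closureFilter (k : ℕ) (r : Fin k → Pt) (f : Pt) : Filter (Pt × (Fin k → ℝ)) :=
  Filter.atTop.bind fun n => Filter.principal (closures k r f n)

lemma eventually_closureFilter {P : Pt × (Fin k → ℝ) → Prop} :
    (∀ᶠ p in closureFilter k r f, P p) ↔ ∃ N, ∀ n ≥ N, ∀ p ∈ closures k r f n, P p :=
  Filter.eventually_atTop

lemma splitRank_ne_top {γ : ℝ} (h : ∀ᶠ p in closureFilter k r f, γ ≤ ∑ i, α i * p.2 i) :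
    splitRank k r f α γ ≠ ⊤ := by
  obtain ⟨N, hN⟩ := eventually_closureFilter.1 h
  exact ne_top_of_le_ne_top (ENat.natCast_ne_top N) (sInf_le ⟨N, rfl, hN N le_rfl⟩)

lemma splitClosure_subset {C H : Set (Pt × (Fin k → ℝ))} (hH : Convex ℝ H) (π : Fin 2 → ℤ)
    (π₀ : ℤ) (h : ∀ p ∈ C, (∑ j, (π j : ℝ) * p.1 j ≤ π₀ ∨
      (π₀ : ℝ) + 1 ≤ ∑ j, (π j : ℝ) * p.1 j) → p ∈ H) :
    splitClosure k C ⊆ H :=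
  fun _ hp => convexHull_min
    (union_subset (fun p hp => h p hp.1 (.inl hp.2)) fun p hp => h p hp.1 (.inr hp.2)) hH
    (mem_iInter₂.1 hp π π₀)

lemma closures_subset {H : Set (Pt × (Fin k → ℝ))} (hH : Convex ℝ H) (h : relaxP k r f ⊆ H) :
    ∀ n, closures k r f n ⊆ H
  | 0 => h
  | n + 1 => splitClosure_subset hH 0 0 fun _ hp _ => closures_subset hH h n hp

lemma convex_setOf_le_dotProduct (ℓ : Pt →ᵃ[ℝ] ℝ) :
    Convex ℝ {p : Pt × (Fin k → ℝ) | ℓ p.1 ≤ α ⬝ᵥ p.2} := by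
  intro p hp q hq a b ha hb hab
  calc ℓ (a • p.1 + b • q.1) = a • ℓ p.1 + b • ℓ q.1 := Convex.combo_affine_apply hab
    _ ≤ a • (α ⬝ᵥ p.2) + b • (α ⬝ᵥ q.2) := by gcongr <;> assumption
    _ = α ⬝ᵥ (a • p.2 + b • q.2) := by rw [dotProduct_add, dotProduct_smul, dotProduct_smul]

lemma IsIntegralForm.exists_eq {h : Pt →ᵃ[ℝ] ℝ} (hh : IsIntegralForm h) :
    ∃ (π : Fin 2 → ℤ) (m : ℤ), ∀ x, h x = ∑ j, (π j : ℝ) * x j + m := by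
  obtain ⟨m, hm⟩ := hh 0 fun _ => ⟨0, by simp⟩
  have hπ : ∀ j, ∃ n : ℤ, h.linear (Pi.single j 1) = n := fun j => by
    obtain ⟨n, hn⟩ := hh (Pi.single j 1) fun i => ⟨Pi.single (M := fun _ => ℤ) j 1 i, by
      simp [Pi.single_apply]⟩
    exact ⟨n - m, by rw [h.decomp', Pi.sub_apply, hn, hm]; simp⟩
  choose π hπ using hπ
  refine ⟨π, m, fun x => ?_⟩
  rw [h.decomp, Pi.add_apply, pi_eq_sum_univ' x, map_sum]
  simp [hπ, hm, mul_comm]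

lemma splitClosed_map_closureFilter :
    SplitClosed ((closureFilter k r f).map fun p => (p.1, α ⬝ᵥ p.2)) := by
  intro h hh ℓ hℓ
  obtain ⟨π, m, hπ⟩ := hh.exists_eq
  obtain ⟨N, hN⟩ := eventually_closureFilter.1 hℓ
  refine eventually_closureFilter.2 ⟨N + 1, fun n hn => ?_⟩
  obtain ⟨n, rfl⟩ := Nat.exists_eq_add_of_le' (Nat.le_of_add_left_le hn)
  refine splitClosure_subset (convex_setOf_le_dotProduct ℓ) π (-m) fun p hp hsplit =>
    hN n (by omega) p hp ?_
  simp only [hπ]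
  push_cast at hsplit
  exact hsplit.imp (fun _ => by linarith) fun _ => by linarith

lemma isCutSystem_inducedSet (hα : 0 ≤ α) (hvalid : ValidIneq k r f α 1)
    (hcomp : IsCompact (inducedSet k r f α)) (hfint : f ∈ interior (inducedSet k r f α)) :
    IsCutSystem ((closureFilter k r f).map fun p => (p.1, α ⬝ᵥ p.2)) (inducedSet k r f α) f where
  splitClosed := splitClosed_map_closureFilter
  isCompact := hcomp
  convex := convex_inducedSet hα
  latticeFree := hvalid.latticeFree
  mem_interior := hfint
  eventually_le ℓ hf hL := eventually_closureFilter.2 ⟨0, fun n _ =>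
    closures_subset (convex_setOf_le_dotProduct ℓ)
      (fun _ hp => le_dotProduct_of_mem_relaxP hα hf hL hp) n⟩

theorem q1_finite_split_rank_general (hα : 0 ≤ α) (hvalid : ValidIneq k r f α 1)
    (hcomp : IsCompact (inducedSet k r f α)) (hfint : f ∈ interior (inducedSet k r f α))
    (hside : HasLatticeFreeSide (inducedSet k r f α)) {z₁ z₂ : Pt} (hne : z₁ ≠ z₂)
    (h₁ : IsIntPt z₁) (h₂ : IsIntPt z₂) (hbase : segment ℝ z₁ z₂ ⊆ frontier (inducedSet k r f α)) :
    splitRank k r f α 1 ≠ ⊤ :=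
  splitRank_ne_top
    ((isCutSystem_inducedSet hα hvalid hcomp hfint).one_le_of_segment_subset_frontier
      hside hne h₁ h₂ hbase)

end Application

theorem q1_finite_split_rank (k : ℕ)
    (hk : 1 ≤ k)
    (r : Fin k → Pt) (f : Pt)
    (hr_rat : ∀ i, IsRatPt (r i)) (hr_ne : ∀ i, r i ≠ 0)
    (hf_rat : IsRatPt f) (hf_int : ¬ IsIntPt f)
    (hne : (mixedP k r f).Nonempty)
    (α : Fin k → ℝ) (hα : ∀ i, 0 ≤ α i)
    (hvalid : ValidIneq k r f α 1)
    (hshape : IsQ1 (inducedSet k r f α))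
    (hfint : f ∈ interior (inducedSet k r f α)) :
    splitRank k r f α 1 ≠ ⊤ := by
  obtain ⟨v, ⟨hv, hext, hside⟩, ⟨z₁, z₂, hz, h₁, h₂, hz₁, hz₂⟩, ⟨j, -, -, hj⟩, -⟩ := hshape
  have hcomp : IsCompact (inducedSet k r f α) := hv ▸ (finite_range v).isCompact_convexHull ℝ
  exact q1_finite_split_rank_general hα hvalid hcomp hfint ⟨v j, hext j, v (j + 1), hext _, hj⟩
    hz h₁ h₂ (((convex_segment _ _).segment_subset hz₁ hz₂).trans (hside 0))
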